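/- Let G be a graph of order n ≥ 3. Then IC(G) = 3 if and only if G is isomorphic to K_3, or G is isomorphic to the star K_{1,n−1}, or G belongs to the family B_2, i.e., G is the disjoint union of a bipartite graph H with minimum degree δ(H) ≥ 1 and idomatic number id(H) = 2 together with a nonempty edgeless graph. -/

import Mathlib

namespace ICNL

variable {V : Type*}

/-- `S` is a dominating set of `G`. -/
def Dominating (G : SimpleGraph V) (S : Set V) : Prop :=
  ∀ v : V, v ∈ S ∨ ∃ u ∈ S, G.Adj u v

/-- `S` is an independent set of `G`. -/
def IndepSet (G : SimpleGraph V) (S : Set V) : Prop :=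
  ∀ ⦃u : V⦄, u ∈ S → ∀ ⦃v : V⦄, v ∈ S → ¬ G.Adj u v

/-- `S` is an independent dominating set of `G`. -/
def IndepDom (G : SimpleGraph V) (S : Set V) : Prop :=
  IndepSet G S ∧ Dominating G S

/-- `A` and `B` form an independent coalition in `G`. -/
def ICCoalition (G : SimpleGraph V) (A B : Set V) : Prop :=
  Disjoint A B ∧ IndepSet G A ∧ IndepSet G B ∧
    ¬ IndepDom G A ∧ ¬ IndepDom G B ∧ IndepDom G (A ∪ B)

/-- `π` is a partition of the vertex set into nonempty classes. -/
def IsPartition (π : Finset (Finset V)) : Prop :=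
  (∀ A ∈ π, A.Nonempty) ∧ ∀ v : V, ∃! A : Finset V, A ∈ π ∧ v ∈ A

/-- `π` is an independent coalition partition of `G`. -/
def IsICPartition (G : SimpleGraph V) (π : Finset (Finset V)) : Prop :=
  IsPartition π ∧
    ∀ A ∈ π, (∃ v : V, (A : Set V) = {v} ∧ Dominating G (A : Set V)) ∨
      (¬ IndepDom G (A : Set V) ∧
        ∃ B ∈ π, B ≠ A ∧ ICCoalition G (A : Set V) (B : Set V))

/-- The independent coalition number: the maximum number of classes of an
ic-partition of `G`. -/
noncomputable def IC (G : SimpleGraph V) : ℕ :=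
  sSup {k | ∃ π : Finset (Finset V), IsICPartition G π ∧ π.card = k}


/-- `π` is an idomatic partition of `G`: a partition of the vertex set into
independent dominating sets. -/
def IsIdomaticPartition (G : SimpleGraph V) (π : Finset (Finset V)) : Prop :=
  IsPartition π ∧ ∀ A ∈ π, IndepDom G (A : Set V)

/-- The idomatic number: the maximum number of classes of an idomatic partition of `G`. -/
noncomputable def idNum (G : SimpleGraph V) : ℕ :=
  sSup {k | ∃ π : Finset (Finset V), IsIdomaticPartition G π ∧ π.card = k}

/-- The star graph `K_{1,n-1}` on `n` vertices. -/
def starGraph (n : ℕ) : SimpleGraph (Fin n) :=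
  SimpleGraph.fromRel (fun u _ => (u : ℕ) = 0)

/-- `G` belongs to the family `B₂`: `G` is the disjoint union of a bipartite graph `H`
with minimum degree at least `1` and idomatic number `2`, together with a nonempty
edgeless graph. -/
def InB2 {U : Type*} (G : SimpleGraph U) : Prop :=
  ∃ (W : Type) (H : SimpleGraph W) (m : ℕ),
    1 ≤ m ∧ H.Colorable 2 ∧ (∀ v : W, ∃ w : W, H.Adj v w) ∧ idNum H = 2 ∧
    Nonempty (G ≃g (H ⊕g (⊥ : SimpleGraph (Fin m))))

/-!
Let `π` be an ic-partition with three classes. If no two classes form a coalition, every class is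
a universal vertex and `G` is `K₃`. Otherwise two classes `A`, `B` form a coalition. If the third
class `C` is a universal vertex, its complement `A ∪ B` is independent and `G` is a star. If `C`
forms a coalition with, say, `A`, then both `A ∪ B` and `A ∪ C` are independent, so `G` is bipartite
and the vertices of `A` are isolated.

It remains to count classes in the presence of isolated vertices. A dominating set contains every
isolated vertex, so all coalitions share one class, which is then exactly the set of isolated
vertices; the other classes are precisely those of an idomatic partition of the rest of the graph.
-/

section Partition

variable {π σ : Finset (Finset V)} {A B : Finset V}

theorem IsPartition.eq_of_mem (hπ : IsPartition π) (hA : A ∈ π) (hB : B ∈ π) {v : V}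
    (hvA : v ∈ A) (hvB : v ∈ B) : A = B :=
  (hπ.2 v).unique ⟨hA, hvA⟩ ⟨hB, hvB⟩

theorem IsPartition.exists_mem (hπ : IsPartition π) (v : V) : ∃ A ∈ π, v ∈ A :=
  let ⟨A, hA, _⟩ := hπ.2 v
  ⟨A, hA⟩

theorem isPartition_of_eq_of_mem (hne : ∀ A ∈ π, A.Nonempty) (hcover : ∀ v : V, ∃ A ∈ π, v ∈ A)
    (heq : ∀ A ∈ π, ∀ B ∈ π, ∀ v, v ∈ A → v ∈ B → A = B) : IsPartition π := by
  refine ⟨hne, fun v => ?_⟩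
  obtain ⟨A, hA, hv⟩ := hcover v
  exact ⟨A, ⟨hA, hv⟩, fun B hB => heq B hB.1 A hA v hB.2 hv⟩

theorem isPartition_iff_exists_finpartition [Fintype V] [DecidableEq V] :
    IsPartition π ↔ ∃ P : Finpartition (Finset.univ : Finset V), P.parts = π := by
  constructor
  · intro hπ
    exact ⟨.ofExistsUnique π (fun _ _ => Finset.subset_univ _) (fun v _ => hπ.2 v)
      fun h => Finset.not_nonempty_empty (hπ.1 ∅ h), rfl⟩
  · rintro ⟨P, rfl⟩
    exact ⟨fun _ => P.nonempty_of_mem_parts, fun v => P.existsUnique_mem (Finset.mem_univ v)⟩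

theorem IsPartition.card_le [Fintype V] (hπ : IsPartition π) : π.card ≤ Fintype.card V := by
  classical
  obtain ⟨P, rfl⟩ := isPartition_iff_exists_finpartition.1 hπ
  exact P.card_parts_le_card

theorem IsPartition.subset_of_cover (hπ : IsPartition π) (hσ : σ ⊆ π)
    (hcover : ∀ v, ∃ A ∈ σ, v ∈ A) : π ⊆ σ := by
  intro A hA
  obtain ⟨v, hv⟩ := hπ.1 A hA
  obtain ⟨B, hB, hvB⟩ := hcover v
  rwa [hπ.eq_of_mem hA (hσ hB) hv hvB]

theorem IsPartition.map_equiv {W : Type*} (hπ : IsPartition π) (e : V ≃ W) :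
    IsPartition (π.map e.finsetCongr.toEmbedding) := by
  refine isPartition_of_eq_of_mem ?_ (fun w => ?_) ?_
  · exact Finset.forall_mem_map.2 fun A hA => by simpa using hπ.1 A hA
  · obtain ⟨A, hA, hw⟩ := hπ.exists_mem (e.symm w)
    exact ⟨e.finsetCongr A, Finset.mem_map_of_mem _ hA, by simpa using hw⟩
  · simp only [Finset.forall_mem_map]
    intro A hA B hB w hwA hwB
    rw [hπ.eq_of_mem hA hB (v := e.symm w) (by simpa using hwA) (by simpa using hwB)]

end Partition

section ClassCounts

/-- The numbers of classes of the families `π` with property `P`. The suprema of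
`classCounts (IsICPartition G)` and `classCounts (IsIdomaticPartition G)` are, by definition,
`IC G` and `idNum G`. -/
def classCounts (P : Finset (Finset V) → Prop) : Set ℕ :=
  {k | ∃ π, P π ∧ π.card = k}

theorem bddAbove_classCounts [Finite V] (P : Finset (Finset V) → Prop) :
    BddAbove (classCounts P) := by
  have := Fintype.ofFinite V
  refine ⟨Fintype.card (Finset V), ?_⟩
  rintro _ ⟨π, -, rfl⟩
  exact π.card_le_univ

-- In `ℕ`, `sSup ∅ = 0`, so a supremum equal to `0` need not be attained.
theorem nat_sSup_eq_iff_isGreatest {S : Set ℕ} (hS : BddAbove S) {k : ℕ} (hk : k ≠ 0) :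
    sSup S = k ↔ IsGreatest S k := by
  refine ⟨?_, IsGreatest.csSup_eq⟩
  rintro rfl
  have hne : S.Nonempty := Set.nonempty_iff_ne_empty.2 fun h => hk (by simp [h])
  exact ⟨Nat.sSup_mem hne hS, fun _ => le_csSup hS⟩

theorem IC_eq_iff_isGreatest [Finite V] {G : SimpleGraph V} {k : ℕ} (hk : k ≠ 0) :
    IC G = k ↔ IsGreatest (classCounts (IsICPartition G)) k :=
  nat_sSup_eq_iff_isGreatest (bddAbove_classCounts _) hk

theorem idNum_eq_iff_isGreatest [Finite V] {G : SimpleGraph V} {k : ℕ} (hk : k ≠ 0) :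
    idNum G = k ↔ IsGreatest (classCounts (IsIdomaticPartition G)) k :=
  nat_sSup_eq_iff_isGreatest (bddAbove_classCounts _) hk

end ClassCounts

section Coalition

variable {G : SimpleGraph V} {S T A B : Set V} {v : V}

theorem IndepSet.mono (hT : IndepSet G T) (h : S ⊆ T) : IndepSet G S :=
  fun _ hu _ hv => hT (h hu) (h hv)

theorem dominating_singleton_iff : Dominating G {v} ↔ G.IsUniversal v := by
  simp only [Dominating, Set.mem_singleton_iff, exists_eq_left, or_iff_not_imp_left]
  exact ⟨fun h w hw => h w hw.symm, fun h w hw => h (Ne.symm hw)⟩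

theorem Dominating.mem_of_isIsolated (hS : Dominating G S) (hv : G.IsIsolated v) : v ∈ S :=
  (hS v).resolve_right fun ⟨u, _, huv⟩ => hv u huv.symm

theorem ICCoalition.of_not_dominating (hAB : Disjoint A B) (hA : ¬ Dominating G A)
    (hB : ¬ Dominating G B) (hunion : IndepDom G (A ∪ B)) : ICCoalition G A B :=
  ⟨hAB, hunion.1.mono Set.subset_union_left, hunion.1.mono Set.subset_union_right,
    fun h => hA h.2, fun h => hB h.2, hunion⟩

theorem ICCoalition.indepDom_union (h : ICCoalition G A B) : IndepDom G (A ∪ B) :=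
  h.2.2.2.2.2

theorem ICCoalition.symm (h : ICCoalition G A B) : ICCoalition G B A :=
  let ⟨hAB, hiA, hiB, hA, hB, hunion⟩ := h
  ⟨hAB.symm, hiB, hiA, hB, hA, Set.union_comm A B ▸ hunion⟩

theorem ICCoalition.ne (h : ICCoalition G A B) : A ≠ B := by
  rintro rfl
  obtain ⟨_, _, _, hA, _, hunion⟩ := h
  exact hA (Set.union_self A ▸ hunion)

theorem isICPartition_iff {π : Finset (Finset V)} :
    IsICPartition G π ↔ IsPartition π ∧ ∀ A ∈ π,
      (∃ v, A = {v} ∧ G.IsUniversal v) ∨ ∃ B ∈ π, ICCoalition G (A : Set V) B := by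
  refine and_congr_right fun _ => forall₂_congr fun A _ => or_congr ?_ ?_
  · refine exists_congr fun v => ?_
    rw [Finset.coe_eq_singleton]
    refine and_congr_right ?_
    rintro rfl
    rw [Finset.coe_singleton, dominating_singleton_iff]
  · refine ⟨fun ⟨_, B, hB, _, h⟩ => ⟨B, hB, h⟩, fun ⟨B, hB, h⟩ => ⟨h.2.2.2.1, B, hB, ?_, h⟩⟩
    exact fun hBA => h.ne (by rw [hBA])

end Coalition

section Iso

variable {W : Type*} {G : SimpleGraph V} {K : SimpleGraph W} {A B S : Set V}

theorem dominating_image_iff (e : G ≃g K) : Dominating K (e '' S) ↔ Dominating G S := by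
  simp only [Dominating, e.surjective.forall, Set.exists_mem_image, e.map_adj_iff,
    e.injective.mem_set_image]

theorem indepSet_image_iff (e : G ≃g K) : IndepSet K (e '' S) ↔ IndepSet G S := by
  simp only [IndepSet, Set.forall_mem_image, e.map_adj_iff]

theorem indepDom_image_iff (e : G ≃g K) : IndepDom K (e '' S) ↔ IndepDom G S :=
  and_congr (indepSet_image_iff e) (dominating_image_iff e)

theorem ICCoalition.image (h : ICCoalition G A B) (e : G ≃g K) :
    ICCoalition K (e '' A) (e '' B) := by
  simpa only [ICCoalition, Set.disjoint_image_iff e.injective, ← Set.image_union,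
    indepSet_image_iff, indepDom_image_iff] using h

theorem isUniversal_apply_iff {v : V} (e : G ≃g K) : K.IsUniversal (e v) ↔ G.IsUniversal v := by
  rw [← dominating_singleton_iff, ← Set.image_singleton, dominating_image_iff,
    dominating_singleton_iff]

theorem IsICPartition.map_iso {π : Finset (Finset V)} (hπ : IsICPartition G π) (e : G ≃g K) :
    IsICPartition K (π.map e.toEquiv.finsetCongr.toEmbedding) := by
  rw [isICPartition_iff] at hπ ⊢
  refine ⟨hπ.1.map_equiv _, Finset.forall_mem_map.2 fun A hA => ?_⟩
  rcases hπ.2 A hA with ⟨v, rfl, hv⟩ | ⟨B, hB, hAB⟩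
  · exact .inl ⟨e v, by simp, (isUniversal_apply_iff e).2 hv⟩
  · exact .inr ⟨_, Finset.mem_map_of_mem _ hB, by simpa using hAB.image e⟩

theorem classCounts_isICPartition_subset (e : G ≃g K) :
    classCounts (IsICPartition G) ⊆ classCounts (IsICPartition K) := by
  rintro _ ⟨π, hπ, rfl⟩
  exact ⟨_, hπ.map_iso e, Finset.card_map _⟩

theorem IC_congr (e : G ≃g K) : IC G = IC K :=
  congrArg sSup <| (classCounts_isICPartition_subset e).antisymm
    (classCounts_isICPartition_subset e.symm)

end Iso

section CompleteGraph

theorem IC_top [Fintype V] : IC (⊤ : SimpleGraph V) = Fintype.card V := by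
  classical
  refine IsGreatest.csSup_eq ⟨⟨(⊥ : Finpartition Finset.univ).parts, ?_, ?_⟩, ?_⟩
  · refine isICPartition_iff.2 ⟨isPartition_iff_exists_finpartition.2 ⟨_, rfl⟩, fun A hA => ?_⟩
    obtain ⟨v, -, rfl⟩ := Finpartition.mem_bot_iff.1 hA
    exact .inl ⟨v, rfl, .top⟩
  · exact Finpartition.card_bot _
  · rintro _ ⟨π, hπ, rfl⟩
    exact hπ.1.card_le

theorem IsICPartition.eq_top_of_forall_not_iCCoalition [Fintype V] {G : SimpleGraph V}
    {π : Finset (Finset V)} (hπ : IsICPartition G π)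
    (hnone : ∀ A ∈ π, ∀ B ∈ π, ¬ ICCoalition G (A : Set V) B) :
    G = ⊤ ∧ Fintype.card V = π.card := by
  classical
  have hclass (A) (hA : A ∈ π) : ∃ v, A = {v} ∧ G.IsUniversal v :=
    ((isICPartition_iff.1 hπ).2 A hA).resolve_right fun ⟨B, hB, hAB⟩ => hnone A hA B hB hAB
  have hsingleton (v : V) : {v} ∈ π ∧ G.IsUniversal v := by
    obtain ⟨A, hA, hvA⟩ := hπ.1.exists_mem v
    obtain ⟨w, rfl, hw⟩ := hclass A hA
    obtain rfl := Finset.mem_singleton.1 hvA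
    exact ⟨hA, hw⟩
  refine ⟨SimpleGraph.eq_top_iff_forall_isUniversal.2 fun v => (hsingleton v).2, ?_⟩
  refine (Finset.card_le_card_of_injOn singleton (fun v _ => (hsingleton v).1)
    Finset.singleton_injective.injOn).antisymm hπ.1.card_le

theorem nonempty_iso_top_iff [Fintype V] {G : SimpleGraph V} {n : ℕ} :
    Nonempty (G ≃g (⊤ : SimpleGraph (Fin n))) ↔ G = ⊤ ∧ Fintype.card V = n := by
  constructor
  · rintro ⟨e⟩
    refine ⟨SimpleGraph.eq_top_iff_forall_isUniversal.2 fun v => ?_, by simpa using e.card_eq⟩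
    exact (isUniversal_apply_iff e).1 .top
  · rintro ⟨rfl, hn⟩
    exact ⟨.completeGraph (Fintype.equivFinOfCardEq hn)⟩

end CompleteGraph

section Star

variable {G : SimpleGraph V} {c : V} {S : Set V}

theorem starGraph_eq (n : ℕ) [NeZero n] : starGraph n = SimpleGraph.starGraph (0 : Fin n) := by
  ext u v
  rw [SimpleGraph.starGraph_adj, ← Fin.val_eq_zero_iff, ← Fin.val_eq_zero_iff]
  exact SimpleGraph.fromRel_adj _ u v

theorem nonempty_iso_starGraph_iff [Fintype V] {n : ℕ} [NeZero n] (hn : Fintype.card V = n) :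
    Nonempty (G ≃g starGraph n) ↔ ∃ c, G = SimpleGraph.starGraph c := by
  classical
  rw [starGraph_eq]
  constructor
  · rintro ⟨e⟩
    refine ⟨e.symm 0, ?_⟩
    ext u v
    have hc (x) : e x = 0 ↔ x = e.symm 0 := e.toEquiv.eq_symm_apply.symm
    rw [← e.map_adj_iff, SimpleGraph.starGraph_adj, SimpleGraph.starGraph_adj,
      e.injective.ne_iff, hc, hc]
  · rintro ⟨c, rfl⟩
    let f := Fintype.equivFinOfCardEq hn
    let e := f.trans (Equiv.swap (f c) 0)
    have hc (v) : e v = 0 ↔ v = c := by rw [← e.injective.eq_iff, show e c = 0 by simp [e]]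
    exact ⟨e, by simp [hc]⟩

theorem eq_starGraph_of_isUniversal (hc : G.IsUniversal c) (hindep : IndepSet G {c}ᶜ) :
    G = SimpleGraph.starGraph c := by
  ext u v
  rw [SimpleGraph.starGraph_adj]
  refine ⟨fun huv => ⟨huv.ne, ?_⟩, ?_⟩
  · by_contra! h
    exact hindep h.1 h.2 huv
  · rintro ⟨hne, rfl | rfl⟩
    · exact hc hne
    · exact (hc hne.symm).symm

theorem dominating_starGraph_iff [Nontrivial V] :
    Dominating (SimpleGraph.starGraph c) S ↔ c ∈ S ∨ {c}ᶜ ⊆ S := by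
  constructor
  · refine fun hS => or_iff_not_imp_left.2 fun hc v hv => (hS v).resolve_right ?_
    rintro ⟨u, hu, -, rfl | rfl⟩
    · exact hc hu
    · exact hv rfl
  · rintro (hc | hS) v
    · by_cases hvc : v = c
      · exact .inl (hvc ▸ hc)
      · exact .inr ⟨c, hc, SimpleGraph.starGraph_center_adj (Ne.symm hvc)⟩
    · obtain rfl | hvc := eq_or_ne v c
      · obtain ⟨u, hu⟩ := exists_ne v
        exact .inr ⟨u, hS hu, SimpleGraph.starGraph_center_adj' hu.symm⟩
      · exact .inl (hS hvc)

theorem indepSet_starGraph_iff : IndepSet (SimpleGraph.starGraph c) S ↔ c ∈ S → S ⊆ {c} := by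
  constructor
  · intro hS hc v hv
    by_contra hvc
    exact hS hc hv (SimpleGraph.starGraph_center_adj (Ne.symm hvc))
  · rintro hS u hu v hv ⟨huv, rfl | rfl⟩
    · exact huv (hS hu hv).symm
    · exact huv (hS hv hu)

theorem indepDom_starGraph_iff [Nontrivial V] :
    IndepDom (SimpleGraph.starGraph c) S ↔ S = {c} ∨ S = {c}ᶜ := by
  rw [IndepDom, indepSet_starGraph_iff, dominating_starGraph_iff]
  by_cases hc : c ∈ S
  · have : S ≠ {c}ᶜ := fun h => by simp [h] at hc
    simp only [hc, true_or, and_true, this, or_false, true_imp_iff]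
    exact ⟨fun h => h.antisymm (Set.singleton_subset_iff.2 hc), fun h => h.subset⟩
  · have : S ≠ {c} := fun h => by simp [h] at hc
    simp only [hc, false_imp_iff, true_and, false_or, this]
    exact ⟨fun h => (Set.subset_compl_singleton_iff.2 hc).antisymm h, fun h => h.superset⟩

theorem exists_ne_and_ne [Fintype V] (h3 : 2 < Fintype.card V) (x y : V) :
    ∃ z, z ≠ x ∧ z ≠ y := by
  classical
  obtain ⟨z, hz⟩ := Finset.exists_mem_notMem_of_card_lt_card
    ((Finset.card_le_two (a := x) (b := y)).trans_lt h3)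
  exact ⟨z, by simpa using hz⟩

theorem not_isUniversal_starGraph [Fintype V] (h3 : 2 < Fintype.card V) {a : V} (ha : a ≠ c) :
    ¬ (SimpleGraph.starGraph c).IsUniversal a := by
  have : Nontrivial V := ⟨a, c, ha⟩
  rw [← dominating_singleton_iff, dominating_starGraph_iff]
  rintro (h | h)
  · exact ha (Set.mem_singleton_iff.1 h).symm
  · obtain ⟨b, hbc, hba⟩ := exists_ne_and_ne h3 c a
    exact hba (h hbc)

theorem card_le_three_of_isICPartition_starGraph [Fintype V] (h3 : 2 < Fintype.card V)
    {π : Finset (Finset V)} (hπ : IsICPartition (SimpleGraph.starGraph c) π) : π.card ≤ 3 := by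
  classical
  have : Nontrivial V := Fintype.one_lt_card_iff_nontrivial.1 (by lia)
  obtain ⟨a, hac⟩ := exists_ne c
  obtain ⟨A, hA, haA⟩ := hπ.1.exists_mem a
  obtain ⟨C, hC, hcC⟩ := hπ.1.exists_mem c
  rcases (isICPartition_iff.1 hπ).2 A hA with ⟨v, rfl, hv⟩ | ⟨B, hB, hAB⟩
  · obtain rfl := Finset.mem_singleton.1 haA
    exact absurd hv (not_isUniversal_starGraph h3 hac)
  · have hleaves : (A ∪ B : Set V) = {c}ᶜ :=
      (indepDom_starGraph_iff.1 hAB.indepDom_union).resolve_left fun h =>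
        hac (h.subset (.inl haA))
    refine (Finset.card_le_card (hπ.1.subset_of_cover (σ := {A, B, C}) ?_ fun v => ?_)).trans
      Finset.card_le_three
    · simp [Finset.insert_subset_iff, hA, hB, hC]
    · by_cases hvc : v = c
      · exact ⟨C, by simp, hvc ▸ hcC⟩
      · rcases hleaves.superset hvc with hv | hv
        · exact ⟨A, by simp, hv⟩
        · exact ⟨B, by simp, hv⟩

theorem iCCoalition_starGraph {A B : Set V} (hA : A.Nonempty) (hB : B.Nonempty)
    (hdisj : Disjoint A B) (hunion : A ∪ B = {c}ᶜ) :
    ICCoalition (SimpleGraph.starGraph c) A B := by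
  obtain ⟨a, ha⟩ := hA
  obtain ⟨b, hb⟩ := hB
  have hac : a ≠ c := hunion.subset (.inl ha)
  have hbc : b ≠ c := hunion.subset (.inr hb)
  have : Nontrivial V := ⟨a, c, hac⟩
  refine .of_not_dominating hdisj ?_ ?_ (indepDom_starGraph_iff.2 (.inr hunion)) <;>
    rw [dominating_starGraph_iff]
  · rintro (hc | h)
    · exact hunion.subset (.inl hc) rfl
    · exact hdisj.notMem_of_mem_left (h hbc) hb
  · rintro (hc | h)
    · exact hunion.subset (.inr hc) rfl
    · exact hdisj.notMem_of_mem_left ha (h hac)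

theorem isPartition_singleton_singleton_compl [Fintype V] [DecidableEq V] {a c : V}
    (hne : ({c, a}ᶜ : Finset V).Nonempty) : IsPartition {{c}, {a}, {c, a}ᶜ} := by
  refine isPartition_of_eq_of_mem ?_ (fun v => ?_) ?_
  · simp only [Finset.forall_mem_insert, Finset.mem_singleton, forall_eq]
    exact ⟨Finset.singleton_nonempty c, Finset.singleton_nonempty a, hne⟩
  · by_cases hv : v ∈ ({c, a}ᶜ : Finset V)
    · exact ⟨_, by simp, hv⟩
    · obtain rfl | rfl : v = c ∨ v = a := by simpa [or_iff_not_imp_left] using hv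
      · exact ⟨{v}, by simp, by simp⟩
      · exact ⟨{v}, by simp, by simp⟩
  · grind [Finset.mem_compl]

theorem three_mem_classCounts_isICPartition_starGraph [Fintype V] (h3 : 2 < Fintype.card V) :
    3 ∈ classCounts (IsICPartition (SimpleGraph.starGraph c)) := by
  classical
  obtain ⟨a, hac, -⟩ := exists_ne_and_ne h3 c c
  obtain ⟨b, hbc, hba⟩ := exists_ne_and_ne h3 c a
  have hb : b ∈ ({c, a}ᶜ : Finset V) := by simp [hbc, hba]
  have hcoalition : ICCoalition (SimpleGraph.starGraph c) ({a} : Finset V)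
      ({c, a}ᶜ : Finset V) := by
    refine iCCoalition_starGraph (by simp) ⟨b, hb⟩ (by simp) ?_
    ext v
    by_cases hv : v = a <;> simp [hv, hac]
  refine ⟨_, isICPartition_iff.2 ⟨isPartition_singleton_singleton_compl ⟨b, hb⟩, ?_⟩,
    Finset.card_eq_three.2 ⟨_, _, _, ?_, ?_, ?_, rfl⟩⟩
  · simp only [Finset.forall_mem_insert, Finset.mem_singleton, forall_eq]
    exact ⟨.inl ⟨c, rfl, fun v => SimpleGraph.starGraph_center_adj⟩,
      .inr ⟨_, by simp, hcoalition⟩, .inr ⟨_, by simp, hcoalition.symm⟩⟩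
  · simpa using hac.symm
  · exact fun h => hbc (Finset.mem_singleton.1 (h ▸ hb))
  · exact fun h => hba (Finset.mem_singleton.1 (h ▸ hb))

theorem IC_starGraph [Fintype V] (h3 : 2 < Fintype.card V) :
    IC (SimpleGraph.starGraph c) = 3 := by
  refine IsGreatest.csSup_eq ⟨three_mem_classCounts_isICPartition_starGraph h3, ?_⟩
  rintro _ ⟨π, hπ, rfl⟩
  exact card_le_three_of_isICPartition_starGraph h3 hπ

end Star

section Isolated

variable {G : SimpleGraph V} {π : Finset (Finset V)} {u v w : V}

theorem IsICPartition.exists_iCCoalition (hπ : IsICPartition G π) (hu : G.IsIsolated u)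
    [Nontrivial V] {A : Finset V} (hA : A ∈ π) : ∃ B ∈ π, ICCoalition G (A : Set V) B :=
  ((isICPartition_iff.1 hπ).2 A hA).resolve_left fun ⟨_, _, hv⟩ => hv.not_isIsolated _ hu

theorem IsICPartition.indepDom_union_of_isIsolated (hπ : IsICPartition G π) (hu : G.IsIsolated u)
    [Nontrivial V] {A B : Finset V} (hA : A ∈ π) (huA : u ∈ A) (hB : B ∈ π) (hBA : B ≠ A) :
    IndepDom G (A ∪ B : Set V) := by
  obtain ⟨C, hC, hBC⟩ := hπ.exists_iCCoalition hu hB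
  rcases hBC.indepDom_union.2.mem_of_isIsolated hu with huB | huC
  · exact absurd (hπ.1.eq_of_mem hB hA huB huA) hBA
  · obtain rfl := hπ.1.eq_of_mem hC hA huC huA
    exact hBC.symm.indepDom_union

theorem IsICPartition.mem_iff_isIsolated (hπ : IsICPartition G π) (hu : G.IsIsolated u)
    (hvw : G.Adj v w) {A : Finset V} (hA : A ∈ π) (huA : u ∈ A) (x : V) :
    x ∈ A ↔ G.IsIsolated x := by
  have : Nontrivial V := ⟨v, w, hvw.ne⟩
  have hunion {B : Finset V} (hB : B ∈ π) (hBA : B ≠ A) : IndepDom G (A ∪ B : Set V) :=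
    hπ.indepDom_union_of_isIsolated hu hA huA hB hBA
  have hAindep : IndepSet G (A : Set V) :=
    let ⟨_, _, hAB⟩ := hπ.exists_iCCoalition hu hA
    hAB.2.1
  have hisolated {x : V} (hx : x ∈ A) : G.IsIsolated x := by
    intro y hxy
    obtain ⟨B, hB, hyB⟩ := hπ.1.exists_mem y
    obtain rfl | hBA := eq_or_ne B A
    · exact hAindep hx hyB hxy
    · exact (hunion hB hBA).1 (.inl hx) (.inr hyB) hxy
  refine ⟨hisolated, fun hx => ?_⟩
  obtain ⟨B, hB, hvB⟩ := hπ.1.exists_mem v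
  obtain ⟨C, hC, hwC⟩ := hπ.1.exists_mem w
  have hBU := hunion hB (by rintro rfl; exact hisolated hvB w hvw)
  have hCU := hunion hC (by rintro rfl; exact hisolated hwC v hvw.symm)
  -- Otherwise `x` lies both in `B` and in `C`, so `B = C` contains the edge `vw`.
  by_contra hxA
  obtain rfl := hπ.1.eq_of_mem hB hC ((hBU.2.mem_of_isIsolated hx).resolve_left hxA)
    ((hCU.2.mem_of_isIsolated hx).resolve_left hxA)
  exact hBU.1 (.inr hvB) (.inr hwC) hvw

end Isolated

section AdjoinInr

variable {W U : Type*} [Fintype U]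

open scoped Classical in
/-- The family of subsets of `W ⊕ U` consisting of the members of `ρ` and one further class, the
whole of `U`. -/
noncomputable def adjoinInr (ρ : Finset (Finset W)) : Finset (Finset (W ⊕ U)) :=
  insert ((∅ : Finset W).disjSum Finset.univ) (ρ.image fun B => B.disjSum ∅)

variable {ρ : Finset (Finset W)}

theorem mem_adjoinInr {A : Finset (W ⊕ U)} :
    A ∈ adjoinInr ρ ↔ A = (∅ : Finset W).disjSum Finset.univ ∨ ∃ B ∈ ρ, B.disjSum ∅ = A := by
  simp [adjoinInr]

theorem disjSum_univ_mem_adjoinInr :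
    (∅ : Finset W).disjSum (Finset.univ : Finset U) ∈ adjoinInr ρ :=
  mem_adjoinInr.2 (.inl rfl)

theorem disjSum_empty_mem_adjoinInr [Nonempty U] {B : Finset W} :
    B.disjSum (∅ : Finset U) ∈ adjoinInr ρ ↔ B ∈ ρ := by
  simp [mem_adjoinInr, Finset.univ_nonempty.ne_empty.symm, -Finset.disjSum_empty,
    -Finset.empty_disjSum]

theorem card_adjoinInr [Nonempty U] : (adjoinInr (U := U) ρ).card = ρ.card + 1 := by
  classical
  rw [adjoinInr, Finset.card_insert_of_notMem, Finset.card_image_of_injective]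
  · exact fun A B h => (Finset.disjSum_inj.1 h).1
  · simp [Finset.univ_nonempty.ne_empty.symm, -Finset.disjSum_empty, -Finset.empty_disjSum]

theorem isPartition_adjoinInr_iff [Nonempty U] :
    IsPartition (adjoinInr (U := U) ρ) ↔ IsPartition ρ := by
  have hmem {B : Finset W} : B.disjSum (∅ : Finset U) ∈ adjoinInr ρ ↔ B ∈ ρ :=
    disjSum_empty_mem_adjoinInr
  constructor
  · intro h
    refine isPartition_of_eq_of_mem (fun B hB => ?_) (fun w => ?_) fun B hB C hC w hwB hwC => ?_
    · simpa using h.1 _ (hmem.2 hB)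
    · obtain ⟨A, hA, hwA⟩ := h.exists_mem (.inl w)
      obtain rfl | ⟨B, hB, rfl⟩ := mem_adjoinInr.1 hA
      · simp at hwA
      · exact ⟨B, hB, Finset.inl_mem_disjSum.1 hwA⟩
    · exact (Finset.disjSum_inj.1 (h.eq_of_mem (hmem.2 hB) (hmem.2 hC)
        (Finset.inl_mem_disjSum.2 hwB) (Finset.inl_mem_disjSum.2 hwC))).1
  · intro h
    refine isPartition_of_eq_of_mem ?_ ?_ ?_
    · intro A hA
      obtain rfl | ⟨B, hB, rfl⟩ := mem_adjoinInr.1 hA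
      · simp
      · simpa using h.1 B hB
    · rintro (w | u)
      · obtain ⟨B, hB, hwB⟩ := h.exists_mem w
        exact ⟨_, hmem.2 hB, Finset.inl_mem_disjSum.2 hwB⟩
      · exact ⟨_, disjSum_univ_mem_adjoinInr, by simp⟩
    · simp only [mem_adjoinInr]
      rintro _ (rfl | ⟨B, hB, rfl⟩) _ (rfl | ⟨C, hC, rfl⟩) (w | u) hA hA'
      all_goals simp only [Finset.inl_mem_disjSum, Finset.inr_mem_disjSum,
        Finset.notMem_empty] at hA hA'
      · rfl
      · rw [h.eq_of_mem hB hC hA hA']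

theorem IsPartition.exists_eq_adjoinInr {π : Finset (Finset (W ⊕ U))} (hπ : IsPartition π)
    (hI : (∅ : Finset W).disjSum Finset.univ ∈ π) : ∃ ρ, π = adjoinInr ρ := by
  have hinj : Function.Injective fun B : Finset W => B.disjSum (∅ : Finset U) :=
    fun _ _ h => (Finset.disjSum_inj.1 h).1
  refine ⟨π.preimage _ hinj.injOn, ?_⟩
  ext A
  simp only [mem_adjoinInr, Finset.mem_preimage]
  refine ⟨fun hA => or_iff_not_imp_left.2 fun hne => ?_, ?_⟩
  · have hright : A.toRight = ∅ := Finset.eq_empty_of_forall_notMem fun u hu =>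
      hne (hπ.eq_of_mem hA hI (Finset.mem_toRight.1 hu) (by simp))
    have hA_eq : A.toLeft.disjSum ∅ = A := by rw [← hright, Finset.toLeft_disjSum_toRight]
    exact ⟨A.toLeft, by rwa [hA_eq], hA_eq⟩
  · rintro (rfl | ⟨B, hB, rfl⟩)
    · exact hI
    · exact hB

end AdjoinInr

section SumBot

variable {W U : Type*} {H : SimpleGraph W} {S : Set (W ⊕ U)}

theorem indepSet_sum_bot_iff :
    IndepSet (H ⊕g (⊥ : SimpleGraph U)) S ↔ IndepSet H (Sum.inl ⁻¹' S) := by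
  simp [IndepSet]

theorem dominating_sum_bot_iff :
    Dominating (H ⊕g (⊥ : SimpleGraph U)) S ↔
      Dominating H (Sum.inl ⁻¹' S) ∧ ∀ u, Sum.inr u ∈ S := by
  simp [Dominating]

theorem indepDom_sum_bot_iff :
    IndepDom (H ⊕g (⊥ : SimpleGraph U)) S ↔
      IndepDom H (Sum.inl ⁻¹' S) ∧ ∀ u, Sum.inr u ∈ S := by
  rw [IndepDom, indepSet_sum_bot_iff, dominating_sum_bot_iff, IndepDom, and_assoc]

theorem isIsolated_sum_bot_inr (u : U) : (H ⊕g (⊥ : SimpleGraph U)).IsIsolated (.inr u) := by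
  rintro (w | w) <;> simp

section Fintype

variable [Fintype U]

theorem indepDom_disjSum_union_iff {B : Finset W} :
    IndepDom (H ⊕g (⊥ : SimpleGraph U))
      (((∅ : Finset W).disjSum Finset.univ : Finset (W ⊕ U)) ∪ (B.disjSum ∅ : Finset (W ⊕ U))) ↔
        IndepDom H (B : Set W) := by
  rw [indepDom_sum_bot_iff]
  simp [Set.preimage]

variable [Nonempty W] [Nonempty U] {ρ : Finset (Finset W)}

theorem IsIdomaticPartition.isICPartition_adjoinInr (hρ : IsIdomaticPartition H ρ) :
    IsICPartition (H ⊕g (⊥ : SimpleGraph U)) (adjoinInr ρ) := by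
  have hcoalition {B : Finset W} (hB : B ∈ ρ) : ICCoalition (H ⊕g (⊥ : SimpleGraph U))
      ((∅ : Finset W).disjSum Finset.univ : Finset (W ⊕ U)) (B.disjSum ∅ : Finset (W ⊕ U)) := by
    refine .of_not_dominating ?_ ?_ ?_ (indepDom_disjSum_union_iff.2 (hρ.2 B hB))
    · rw [Finset.disjoint_coe, Finset.disjoint_left]
      simp
    · rw [dominating_sum_bot_iff]
      simp [Dominating]
    · rw [dominating_sum_bot_iff]
      simp
  refine isICPartition_iff.2 ⟨isPartition_adjoinInr_iff.2 hρ.1, fun A hA => .inr ?_⟩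
  obtain rfl | ⟨B, hB, rfl⟩ := mem_adjoinInr.1 hA
  · obtain ⟨B, hB, -⟩ := hρ.1.exists_mem (Classical.arbitrary W)
    exact ⟨_, disjSum_empty_mem_adjoinInr.2 hB, hcoalition hB⟩
  · exact ⟨_, disjSum_univ_mem_adjoinInr, (hcoalition hB).symm⟩

theorem IsICPartition.exists_eq_adjoinInr (hH : ∀ v, ∃ w, H.Adj v w)
    {π : Finset (Finset (W ⊕ U))} (hπ : IsICPartition (H ⊕g (⊥ : SimpleGraph U)) π) :
    ∃ ρ, IsIdomaticPartition H ρ ∧ π = adjoinInr ρ := by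
  let u : U := Classical.arbitrary U
  let v : W := Classical.arbitrary W
  obtain ⟨w, hvw⟩ := hH v
  have hu := isIsolated_sum_bot_inr (H := H) u
  obtain ⟨A, hA, huA⟩ := hπ.1.exists_mem (.inr u)
  have hA_mem := hπ.mem_iff_isIsolated hu (SimpleGraph.sum_adj_inl.2 hvw) hA huA
  have hA_eq : A = (∅ : Finset W).disjSum Finset.univ := by
    ext (x | x)
    · obtain ⟨y, hxy⟩ := hH x
      rw [hA_mem, Finset.inl_mem_disjSum, iff_false_right (Finset.notMem_empty x)]
      exact fun h => h (.inl y) (SimpleGraph.sum_adj_inl.2 hxy)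
    · simp [hA_mem, isIsolated_sum_bot_inr]
  subst hA_eq
  obtain ⟨ρ, rfl⟩ := hπ.1.exists_eq_adjoinInr hA
  refine ⟨ρ, ⟨isPartition_adjoinInr_iff.1 hπ.1, fun B hB => ?_⟩, rfl⟩
  have : Nontrivial (W ⊕ U) := ⟨.inl v, .inr u, Sum.inl_ne_inr⟩
  refine indepDom_disjSum_union_iff.1 (hπ.indepDom_union_of_isIsolated hu hA huA
    (disjSum_empty_mem_adjoinInr.2 hB) fun h => ?_)
  exact Finset.univ_nonempty.ne_empty (Finset.disjSum_inj.1 h).2.symm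

end Fintype

variable [Nonempty W] [Nonempty U] [Finite U]

theorem classCounts_isICPartition_sum_bot (hH : ∀ v, ∃ w, H.Adj v w) :
    classCounts (IsICPartition (H ⊕g (⊥ : SimpleGraph U))) =
      (· + 1) '' classCounts (IsIdomaticPartition H) := by
  have := Fintype.ofFinite U
  ext k
  constructor
  · rintro ⟨π, hπ, rfl⟩
    obtain ⟨ρ, hρ, rfl⟩ := hπ.exists_eq_adjoinInr hH
    exact ⟨ρ.card, ⟨ρ, hρ, rfl⟩, card_adjoinInr.symm⟩
  · rintro ⟨_, ⟨ρ, hρ, rfl⟩, rfl⟩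
    exact ⟨adjoinInr ρ, hρ.isICPartition_adjoinInr, card_adjoinInr⟩

theorem IC_sum_bot_eq_add_one_iff [Finite W] (hH : ∀ v, ∃ w, H.Adj v w) {k : ℕ} (hk : k ≠ 0) :
    IC (H ⊕g (⊥ : SimpleGraph U)) = k + 1 ↔ idNum H = k := by
  rw [IC_eq_iff_isGreatest k.succ_ne_zero, idNum_eq_iff_isGreatest hk,
    classCounts_isICPartition_sum_bot hH]
  simp [IsGreatest, mem_upperBounds]

end SumBot

section InB2

variable {G : SimpleGraph V}

theorem InB2.IC_eq_three [Finite V] (hG : InB2 G) : IC G = 3 := by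
  obtain ⟨W, H, m, hm, -, hH, hid, ⟨e⟩⟩ := hG
  have : NeZero m := ⟨by lia⟩
  have : Finite (W ⊕ Fin m) := .of_equiv V e.toEquiv
  have : Finite W := .of_injective (Sum.inl : W → W ⊕ Fin m) Sum.inl_injective
  have : Nonempty W := by
    obtain ⟨⟨ρ, hρ, hcard⟩, -⟩ := (idNum_eq_iff_isGreatest two_ne_zero).1 hid
    obtain ⟨B, hB⟩ := Finset.card_pos.1 (hcard ▸ two_pos)
    exact (hρ.1.1 B hB).to_subtype.map (↑)
  rw [IC_congr e]
  exact (IC_sum_bot_eq_add_one_iff hH two_ne_zero).2 hid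

/-- A graph is the disjoint union of the subgraph induced on its non-isolated vertices and an
edgeless graph. -/
noncomputable def supportSumIsolatedIso (G : SimpleGraph V) :
    G.induce G.support ⊕g (⊥ : SimpleGraph ↥G.supportᶜ) ≃g G where
  toEquiv := by classical exact Equiv.Set.sumCompl G.support
  map_rel_iff' {a b} := by
    have hisolated (x : ↥G.supportᶜ) : G.IsIsolated x :=
      (G.notMem_support_iff_isIsolated).1 x.2
    rcases a with a | a <;> rcases b with b | b
    · simp
    · simpa using fun h => hisolated b a h.symm
    · simpa using hisolated a b
    · simpa using hisolated a b

theorem exists_iso_sum_bot [Finite V] (G : SimpleGraph V) :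
    ∃ (p m : ℕ) (H : SimpleGraph (Fin p)), (∀ v, ∃ w, H.Adj v w) ∧
      Nonempty (G ≃g H ⊕g (⊥ : SimpleGraph (Fin m))) := by
  classical
  have := Fintype.ofFinite V
  let eH := (G.induce G.support).overFinIso rfl
  let eI : (⊥ : SimpleGraph ↥G.supportᶜ) ≃g (⊥ : SimpleGraph (Fin _)) :=
    ⟨Fintype.equivFin _, by simp⟩
  refine ⟨_, _, _, fun v => ?_,
    ⟨(supportSumIsolatedIso G).symm.trans (SimpleGraph.Iso.sumCongr eH eI)⟩⟩
  obtain ⟨w, hw⟩ := (eH.symm v).2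
  refine ⟨eH ⟨w, _, hw.symm⟩, ?_⟩
  rw [← eH.symm.map_adj_iff]
  simpa using hw

theorem inB2_of_IC_eq_three [Finite V] (hIC : IC G = 3) (hG : G.Colorable 2) {u v w : V}
    (hu : G.IsIsolated u) (hvw : G.Adj v w) : InB2 G := by
  obtain ⟨p, m, H, hH, ⟨e⟩⟩ := exists_iso_sum_bot G
  have hm : Nonempty (Fin m) := by
    rcases hx : e u with x | i
    · obtain ⟨y, hxy⟩ := hH x
      refine absurd ?_ (hu (e.symm (.inl y)))
      rwa [← e.map_adj_iff, hx, e.apply_symm_apply, SimpleGraph.sum_adj_inl]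
    · exact ⟨i⟩
  have hp : Nonempty (Fin p) := by
    rcases hx : e v with x | i
    · exact ⟨x⟩
    · exact absurd (hx ▸ e.map_adj_iff.2 hvw) (isIsolated_sum_bot_inr i _)
  refine ⟨Fin p, H, m, Fin.pos_iff_nonempty.2 hm, ?_, hH, ?_, ⟨e⟩⟩
  · exact hG.of_hom (e.symm.toHom.comp SimpleGraph.Embedding.sumInl.toHom)
  · rwa [IC_congr e, IC_sum_bot_eq_add_one_iff hH two_ne_zero] at hIC

theorem colorable_two_of_indepSet_compl {S : Set V} (hS : IndepSet G S) (hSc : IndepSet G Sᶜ) :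
    G.Colorable 2 := by
  rw [← SimpleGraph.IsBipartite, SimpleGraph.isBipartite_iff_exists_isBipartiteWith]
  refine ⟨S, Sᶜ, disjoint_compl_right, fun v w hvw => ?_⟩
  by_cases hv : v ∈ S
  · exact .inl ⟨hv, fun hw => hS hv hw hvw⟩
  · exact .inr ⟨hv, not_not.1 fun hw => hSc hv hw hvw⟩

theorem inB2_of_indepDom_union [Finite V] (hIC : IC G = 3) {A B C : Set V} (hA : A.Nonempty)
    (hcover : A ∪ B ∪ C = Set.univ) (hproper : A ∪ B ≠ Set.univ) (hAB : IndepDom G (A ∪ B))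
    (hAC : IndepSet G (A ∪ C)) : InB2 G := by
  obtain ⟨a, ha⟩ := hA
  have ha_isolated : G.IsIsolated a := fun v hav => by
    rcases hcover.superset (Set.mem_univ v) with hv | hv
    · exact hAB.1 (.inl ha) hv hav
    · exact hAC (.inl ha) (.inr hv) hav
  have hcompl : (A ∪ B)ᶜ ⊆ C := Set.compl_subset_iff_union.2 hcover
  obtain ⟨c, hc⟩ := (Set.ne_univ_iff_exists_notMem _).1 hproper
  obtain ⟨v, -, hvc⟩ := (hAB.2 c).resolve_left hc
  exact inB2_of_IC_eq_three hIC (colorable_two_of_indepSet_compl hAB.1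
    (hAC.mono (hcompl.trans Set.subset_union_right))) ha_isolated hvc

end InB2

section ThreeClasses

theorem exists_eq_insert_of_card_eq_three {α : Type*} [DecidableEq α] {s : Finset α}
    (hs : s.card = 3) {a b : α} (ha : a ∈ s) (hb : b ∈ s) (hab : a ≠ b) :
    ∃ c, c ≠ a ∧ c ≠ b ∧ s = {a, b, c} := by
  have hcard : ((s.erase a).erase b).card = 1 := by
    rw [Finset.card_erase_of_mem (Finset.mem_erase.2 ⟨hab.symm, hb⟩), Finset.card_erase_of_mem ha,
      hs]
  obtain ⟨c, hc⟩ := Finset.card_eq_one.1 hcard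
  have hc_mem : c ∈ (s.erase a).erase b := hc ▸ Finset.mem_singleton_self c
  simp only [Finset.mem_erase] at hc_mem
  refine ⟨c, hc_mem.2.1, hc_mem.1, ?_⟩
  rw [← hc, Finset.insert_erase (Finset.mem_erase.2 ⟨hab.symm, hb⟩), Finset.insert_erase ha]

theorem IsICPartition.eq_starGraph_or_inB2 [Finite V] {G : SimpleGraph V} (hIC : IC G = 3)
    {π : Finset (Finset V)} (hπ : IsICPartition G π) (hcard : π.card = 3) {A B : Finset V}
    (hA : A ∈ π) (hB : B ∈ π) (hAB : ICCoalition G (A : Set V) B) :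
    (∃ c, G = SimpleGraph.starGraph c) ∨ InB2 G := by
  classical
  obtain ⟨C, hCA, hCB, rfl⟩ :=
    exists_eq_insert_of_card_eq_three hcard hA hB fun h => hAB.ne (congrArg _ h)
  have hC : C ∈ ({A, B, C} : Finset (Finset V)) := by simp
  have hcover : (A ∪ B ∪ C : Set V) = Set.univ := Set.eq_univ_of_forall fun v => by
    simpa [or_assoc] using hπ.1.exists_mem v
  have hproper : (A ∪ B : Set V) ≠ Set.univ := by
    obtain ⟨c, hc⟩ := hπ.1.1 C hC
    refine (Set.ne_univ_iff_exists_notMem _).2 ⟨c, ?_⟩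
    rintro (hcA | hcB)
    · exact hCA (hπ.1.eq_of_mem hC hA hc hcA)
    · exact hCB (hπ.1.eq_of_mem hC hB hc hcB)
  rcases (isICPartition_iff.1 hπ).2 C hC with ⟨c, rfl, hc⟩ | ⟨D, hD, hCD⟩
  · rw [Finset.coe_singleton, Set.union_comm, ← Set.compl_subset_iff_union] at hcover
    exact .inl ⟨c, eq_starGraph_of_isUniversal hc (hAB.indepDom_union.1.mono hcover)⟩
  · right
    simp only [Finset.mem_insert, Finset.mem_singleton] at hD
    rcases hD with rfl | rfl | rfl
    · exact inB2_of_indepDom_union hIC (hπ.1.1 D hA) hcover hproper hAB.indepDom_union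
        hCD.symm.indepDom_union.1
    · rw [Set.union_comm (A : Set V)] at hcover hproper
      exact inB2_of_indepDom_union hIC (hπ.1.1 D hB) hcover hproper hAB.symm.indepDom_union
        hCD.symm.indepDom_union.1
    · exact absurd rfl hCD.ne

theorem eq_top_or_eq_starGraph_or_inB2 [Fintype V] {G : SimpleGraph V} (hIC : IC G = 3) :
    (G = ⊤ ∧ Fintype.card V = 3) ∨ (∃ c, G = SimpleGraph.starGraph c) ∨ InB2 G := by
  classical
  obtain ⟨⟨π, hπ, hcard⟩, -⟩ := (IC_eq_iff_isGreatest three_ne_zero).1 hIC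
  by_cases hex : ∃ A ∈ π, ∃ B ∈ π, ICCoalition G (A : Set V) B
  · obtain ⟨A, hA, B, hB, hAB⟩ := hex
    exact .inr (hπ.eq_starGraph_or_inB2 hIC hcard hA hB hAB)
  · exact .inl (hcard ▸ hπ.eq_top_of_forall_not_iCCoalition (by simpa using hex))

end ThreeClasses

theorem stmt_14 {V : Type*} [Fintype V] (G : SimpleGraph V) (n : ℕ)
    (hn : Fintype.card V = n) (h3 : 3 ≤ n) :
    IC G = 3 ↔ (Nonempty (G ≃g (⊤ : SimpleGraph (Fin 3))) ∨
      Nonempty (G ≃g starGraph n) ∨ InB2 G) := by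
  have : NeZero n := ⟨by lia⟩
  rw [nonempty_iso_top_iff, nonempty_iso_starGraph_iff hn]
  refine ⟨eq_top_or_eq_starGraph_or_inB2, ?_⟩
  rintro (⟨rfl, hcard⟩ | ⟨c, rfl⟩ | hB2)
  · rw [IC_top, hcard]
  · exact IC_starGraph (by lia)
  · exact hB2.IC_eq_three

end ICNL
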